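/- For every p̄ ∈ S: the empirical measures e_n(x) converge in the weak* topology to ν_p̄ as n → ∞ if and only if τ̄_k(x)/τ_k(x) → p̄ as k → ∞. -/

import Mathlib

open MeasureTheory Filter Topology Set
open scoped ENNReal

noncomputable section

variable {X : Type*} [MetricSpace X] [CompactSpace X] [MeasurableSpace X] [BorelSpace X]

/-- The `n`-th empirical measure `e_n(x) = (1/n) ∑_{k<n} δ_{f^k x}`. -/
def empMeasure (f : X → X) (n : ℕ) (x : X) : Measure X :=
  (n : ℝ≥0∞)⁻¹ • ∑ k ∈ Finset.range n, Measure.dirac (f^[k] x)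

/-- Weak* convergence of a sequence of measures, tested against bounded continuous functions. -/
def WeakTendsto (μ : ℕ → Measure X) (ν : Measure X) : Prop :=
  ∀ g : BoundedContinuousFunction X ℝ,
    Tendsto (fun n => ∫ y, g y ∂(μ n)) atTop (𝓝 (∫ y, g y ∂ν))

/-- `V(x)`: the set of weak* limit points of `(e_n(x))_{n ≥ 1}`. -/
def Vset (f : X → X) (x : X) : Set (Measure X) :=
  {ν | ∃ φ : ℕ → ℕ, StrictMono φ ∧ WeakTendsto (fun k => empMeasure f (φ k + 1) x) ν}

/-- The simplex `S = {p̄ ∈ [0,1]^d : p₁ + ⋯ + p_d = 1}`. -/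
def simplexS (d : ℕ) : Set (Fin d → ℝ) :=
  {p | (∀ i, p i ∈ Set.Icc (0:ℝ) 1) ∧ ∑ i, p i = 1}

/-- The measure `ν_p̄ = ∑_j p_j δ_{ξ_j}`. -/
def nuMeasure {d : ℕ} (ξ : Fin d → X) (p : Fin d → ℝ) : Measure X :=
  ∑ j, ENNReal.ofReal (p j) • Measure.dirac (ξ j)

/-- The first hit time `τ(x) = min {n ≥ 1 : f^n(x) ∈ Y}` (junk value `0` if the orbit
never hits `Y`). -/
def hitTime (f : X → X) (Y : Set X) (x : X) : ℕ :=
  sInf {n | 1 ≤ n ∧ f^[n] x ∈ Y}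

/-- The first return map `F = f^τ`. -/
def retMap (f : X → X) (Y : Set X) (x : X) : X :=
  f^[hitTime f Y x] x

/-- The Birkhoff sums `τ_k(x) = ∑_{j<k} τ(F^j x)` of the return time under `F`. -/
def tauSum (f : X → X) (Y : Set X) (k : ℕ) (x : X) : ℕ :=
  ∑ j ∈ Finset.range k, hitTime f Y ((retMap f Y)^[j] x)

/-- `τ^{(i)}(y) = #{1 ≤ n ≤ τ(y) : f^n(y) ∈ A}` (with `A = X_i`). -/
def tauJ (f : X → X) (Y A : Set X) (y : X) : ℕ :=
  ∑ n ∈ Finset.Icc 1 (hitTime f Y y), A.indicator (fun _ => 1) (f^[n] y)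

/-- The Birkhoff sums `τ^{(i)}_k(x) = ∑_{j<k} τ^{(i)}(F^j x)`. -/
def tauJSum (f : X → X) (Y A : Set X) (k : ℕ) (x : X) : ℕ :=
  ∑ j ∈ Finset.range k, tauJ f Y A ((retMap f Y)^[j] x)

/-- The vector of ratios `τ̄_k(x)/τ_k(x) ∈ [0,1]^d`. -/
def tauRatio (f : X → X) (Y : Set X) {d : ℕ} (Xp : Fin d → Set X) (k : ℕ) (x : X) :
    Fin d → ℝ :=
  fun i => (tauJSum f Y (Xp i) k x : ℝ) / (tauSum f Y k x : ℝ)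

/-- `T(x) ⊆ [0,1]^d`: the set of limit points of the sequence `(τ̄_k(x)/τ_k(x))_{k ≥ 1}`. -/
def Tset (f : X → X) (Y : Set X) {d : ℕ} (Xp : Fin d → Set X) (x : X) :
    Set (Fin d → ℝ) :=
  {p | ∃ φ : ℕ → ℕ, StrictMono φ ∧
    Tendsto (fun k => tauRatio f Y Xp (φ k + 1) x) atTop (𝓝 p)}

/-- Number of visits to `A` of the orbit of `x` before time `n`. -/
def vis (f : X → X) (A : Set X) (n : ℕ) (x : X) : ℝ :=
  ∑ m ∈ Finset.range n, A.indicator (fun _ => (1:ℝ)) (f^[m] x)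

lemma integral_empMeasure (f : X → X) (n : ℕ) (x : X) (g : BoundedContinuousFunction X ℝ) :
    ∫ y, g y ∂(empMeasure f n x) = (n : ℝ)⁻¹ * ∑ k ∈ Finset.range n, g (f^[k] x) := by
  unfold empMeasure
  rw [integral_smul_measure, integral_finsetSum_measure]
  · simp
  · intro i _
    exact g.integrable _

lemma integral_nuMeasure {d : ℕ} (ξ : Fin d → X) (p : Fin d → ℝ) (hp : ∀ i, 0 ≤ p i)
    (g : BoundedContinuousFunction X ℝ) :
    ∫ y, g y ∂(nuMeasure ξ p) = ∑ j, p j * g (ξ j) := by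
  unfold nuMeasure
  rw [integral_finsetSum_measure]
  · simp [integral_smul_measure, hp]
  · intro i _
    exact (g.integrable _).smul_measure (by simp)

lemma hit_spec (f : X → X) (Y : Set X) (z : X) (h : ∃ n, 1 ≤ n ∧ f^[n] z ∈ Y) :
    1 ≤ hitTime f Y z ∧ f^[hitTime f Y z] z ∈ Y := Nat.sInf_mem h

lemma hit_min (f : X → X) (Y : Set X) (z : X) (m : ℕ) (h1 : 1 ≤ m) (h2 : m < hitTime f Y z) :
    f^[m] z ∉ Y := fun h => Nat.notMem_of_lt_sInf h2 ⟨h1, h⟩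

lemma tauSum_succ (f : X → X) (Y : Set X) (k : ℕ) (x : X) :
    tauSum f Y (k+1) x = tauSum f Y k x + hitTime f Y ((retMap f Y)^[k] x) := by
  simp [tauSum, Finset.sum_range_succ]

lemma ret_iter (f : X → X) (Y : Set X) (k : ℕ) (x : X) :
    (retMap f Y)^[k] x = f^[tauSum f Y k x] x := by
  induction k with
  | zero => simp [tauSum]
  | succ k ih =>
    rw [Function.iterate_succ_apply', tauSum_succ, add_comm, Function.iterate_add_apply, ← ih]
    rfl

section orbit
variable (f : X → X) (Y : Set X) (x : X) (hxY : x ∈ Y)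
  (hxrec : ∀ N : ℕ, ∃ n, N ≤ n ∧ 1 ≤ n ∧ f^[n] x ∈ Y)

include hxrec in
lemma ret_ex (N : ℕ) : ∃ n, 1 ≤ n ∧ f^[n] (f^[N] x) ∈ Y := by
  obtain ⟨n, h1, _, h3⟩ := hxrec (N+1)
  refine ⟨n - N, by omega, ?_⟩
  rw [← Function.iterate_add_apply, Nat.sub_add_cancel (by omega)]
  exact h3

include hxrec in
lemma tau_lt (k : ℕ) : tauSum f Y k x < tauSum f Y (k+1) x := by
  rw [tauSum_succ, ret_iter]
  have := (hit_spec f Y _ (ret_ex f Y x hxrec (tauSum f Y k x))).1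
  omega

include hxY hxrec in
lemma tau_mem (k : ℕ) : f^[tauSum f Y k x] x ∈ Y := by
  cases k with
  | zero => simpa [tauSum] using hxY
  | succ k =>
    rw [tauSum_succ, add_comm, Function.iterate_add_apply, ret_iter]
    exact (hit_spec f Y _ (ret_ex f Y x hxrec (tauSum f Y k x))).2

lemma tau_between (k m : ℕ) (h1 : tauSum f Y k x < m) (h2 : m < tauSum f Y (k+1) x) :
    f^[m] x ∉ Y := by
  rw [tauSum_succ, ret_iter] at h2
  have := hit_min f Y (f^[tauSum f Y k x] x) (m - tauSum f Y k x) (by omega) (by omega)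
  rwa [← Function.iterate_add_apply, Nat.sub_add_cancel (by omega)] at this

include hxY hxrec in
lemma tauJSum_eq (A : Set X) (hA : Disjoint A Y) (k : ℕ) :
    (tauJSum f Y A k x : ℝ) = vis f A (tauSum f Y k x) x := by
  induction k with
  | zero => simp [tauJSum, tauSum, vis]
  | succ k ih =>
    have e1 : tauJSum f Y A (k+1) x = tauJSum f Y A k x + tauJ f Y A ((retMap f Y)^[k] x) := by
      simp [tauJSum, Finset.sum_range_succ]
    have e2 : vis f A (tauSum f Y (k+1) x) x = vis f A (tauSum f Y k x) x +
        ∑ m ∈ Finset.range (hitTime f Y ((retMap f Y)^[k] x)),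
          A.indicator (fun _ => (1:ℝ)) (f^[m] ((retMap f Y)^[k] x)) := by
      rw [tauSum_succ]
      unfold vis
      rw [Finset.sum_range_add]
      congr 1
      refine Finset.sum_congr rfl fun m _ => ?_
      rw [ret_iter f Y k x, ← Function.iterate_add_apply, add_comm]
    rw [e1, e2, Nat.cast_add, ih]
    congr 1
    have h0 : (retMap f Y)^[k] x ∉ A := by
      rw [ret_iter]
      exact fun h => hA.le_bot ⟨h, tau_mem f Y x hxY hxrec k⟩
    have h1 : f^[hitTime f Y ((retMap f Y)^[k] x)] ((retMap f Y)^[k] x) ∉ A := by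
      have := tau_mem f Y x hxY hxrec (k+1)
      rw [← ret_iter, Function.iterate_succ_apply'] at this
      exact fun h => hA.le_bot ⟨h, this⟩
    unfold tauJ
    generalize (retMap f Y)^[k] x = z at *
    generalize hitTime f Y z = n at *
    have e3 : ((∑ m ∈ Finset.Icc 1 n, A.indicator (fun _ => 1) (f^[m] z) : ℕ) : ℝ)
        = ∑ m ∈ Finset.Icc 1 n, A.indicator (fun _ => (1:ℝ)) (f^[m] z) := by
      rw [Nat.cast_sum]
      refine Finset.sum_congr rfl fun m _ => ?_
      by_cases h : f^[m] z ∈ A <;> simp [h]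
    rw [e3]
    have e4 := Finset.sum_range_succ' (fun m => A.indicator (fun _ => (1:ℝ)) (f^[m] z)) n
    have e5 := Finset.sum_range_succ (fun m => A.indicator (fun _ => (1:ℝ)) (f^[m] z)) n
    have e6 : ∑ m ∈ Finset.Icc 1 n, A.indicator (fun _ => (1:ℝ)) (f^[m] z) =
        ∑ m ∈ Finset.range n, A.indicator (fun _ => (1:ℝ)) (f^[m+1] z) := by
      rw [Finset.range_eq_Ico, Finset.sum_Ico_add' (fun m => A.indicator (fun _ => (1:ℝ)) (f^[m] z)) 0 n 1]
      rfl
    rw [e6]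
    have h0' : A.indicator (fun _ => (1:ℝ)) (f^[0] z) = 0 := by simp [h0]
    have h1' : A.indicator (fun _ => (1:ℝ)) (f^[n] z) = 0 := by simp [h1]
    simp only [h0', h1'] at e4 e5
    linarith

include hxrec in
lemma tau_tendsto : Tendsto (fun k => tauSum f Y k x) atTop atTop :=
  (strictMono_nat_of_lt_succ (tau_lt f Y x hxrec)).tendsto_atTop

end orbit

lemma vis_succ (f : X → X) (A : Set X) (n : ℕ) (x : X) :
    vis f A (n+1) x = vis f A n x + A.indicator (fun _ => (1:ℝ)) (f^[n] x) := by
  simp [vis, Finset.sum_range_succ]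

lemma ind_nonneg (A : Set X) (y : X) : 0 ≤ A.indicator (fun _ => (1:ℝ)) y :=
  Set.indicator_nonneg (fun _ _ => zero_le_one) _

lemma ind_le (A : Set X) (y : X) : A.indicator (fun _ => (1:ℝ)) y ≤ 1 :=
  Set.indicator_le_self' (fun _ _ => zero_le_one) _

lemma vis_nonneg (f : X → X) (A : Set X) (n : ℕ) (x : X) : 0 ≤ vis f A n x :=
  Finset.sum_nonneg fun _ _ => ind_nonneg _ _

lemma vis_add_le (f : X → X) (A : Set X) (n l : ℕ) (x : X) :
    vis f A (n+l) x ≤ vis f A n x + l := by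
  induction l with
  | zero => simp
  | succ l ih =>
    rw [← add_assoc, vis_succ]
    have := ind_le A (f^[n+l] x)
    push_cast
    linarith

/-- `X_1, …, X_d, Y` partition the space. -/
lemma part_sum {d : ℕ} (Y : Set X) (Xp : Fin d → Set X)
    (hXd : Pairwise (Function.onFun Disjoint Xp)) (hXU : (⋃ j, Xp j) = Yᶜ) (y : X) :
    ∑ j, (Xp j).indicator (fun _ => (1:ℝ)) y + Y.indicator (fun _ => (1:ℝ)) y = 1 := by
  by_cases hy : y ∈ Y
  · have h : ∀ j, y ∉ Xp j := fun j h => by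
      have : y ∈ Yᶜ := hXU ▸ Set.mem_iUnion.2 ⟨j, h⟩
      exact this hy
    simp [h, hy]
  · have : y ∈ ⋃ j, Xp j := hXU ▸ hy
    obtain ⟨j, hj⟩ := Set.mem_iUnion.1 this
    rw [Finset.sum_eq_single j]
    · simp [hj, hy]
    · intro i _ hij
      have : y ∉ Xp i := fun h => (hXd hij).le_bot ⟨h, hj⟩
      simp [this]
    · simp

lemma vis_sum {d : ℕ} (f : X → X) (Y : Set X) (Xp : Fin d → Set X)
    (hXd : Pairwise (Function.onFun Disjoint Xp)) (hXU : (⋃ j, Xp j) = Yᶜ) (n : ℕ) (x : X) :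
    ∑ j, vis f (Xp j) n x + vis f Y n x = n := by
  unfold vis
  rw [Finset.sum_comm, ← Finset.sum_add_distrib]
  simp [part_sum Y Xp hXd hXU]

/-- Weak convergence forces convergence of visit frequencies. -/
lemma weak_to_freq {d : ℕ} (f : X → X) (Y : Set X) (ξ : Fin d → X) (Xp : Fin d → Set X)
    (hXd : Pairwise (Function.onFun Disjoint Xp)) (hXU : (⋃ j, Xp j) = Yᶜ)
    (hξint : ∀ j, ξ j ∈ interior (Xp j)) (x : X) (p : Fin d → ℝ) (hp : p ∈ simplexS d)
    (h : WeakTendsto (fun n => empMeasure f (n + 1) x) (nuMeasure ξ p)) (j : Fin d) :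
    Tendsto (fun n : ℕ => vis f (Xp j) n x / n) atTop (𝓝 (p j)) := by
  -- lower bounds
  have low : ∀ i, ∃ u : ℕ → ℝ, Tendsto u atTop (𝓝 (p i)) ∧
      ∀ n : ℕ, u n ≤ vis f (Xp i) n x / n := by
    intro i
    obtain ⟨g, hg0, hg1, hg⟩ := exists_continuous_zero_one_of_isClosed
      (s := (interior (Xp i))ᶜ) (t := {ξ i}) isOpen_interior.isClosed_compl isClosed_singleton
      (by simpa using hξint i)
    let G : BoundedContinuousFunction X ℝ := BoundedContinuousFunction.mkOfCompact g
    have hG := h G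
    rw [integral_nuMeasure ξ p (fun i => (hp.1 i).1)] at hG
    simp_rw [integral_empMeasure] at hG
    have hG2 := (tendsto_add_atTop_iff_nat
      (f := fun n : ℕ => (n:ℝ)⁻¹ * ∑ k ∈ Finset.range n, G (f^[k] x)) 1).1 hG
    have hv : ∑ k, p k * G (ξ k) = p i := by
      rw [Finset.sum_eq_single i]
      · have : G (ξ i) = 1 := hg1 rfl
        simp [this]
      · intro k _ hk
        have : G (ξ k) = 0 := hg0 (fun hh =>
          (hXd hk).le_bot ⟨interior_subset (hξint k), interior_subset hh⟩)
        simp [this]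
      · simp
    rw [hv] at hG2
    refine ⟨_, hG2, fun n => ?_⟩
    rw [div_eq_inv_mul]
    refine mul_le_mul_of_nonneg_left (Finset.sum_le_sum fun m _ => ?_) (by positivity)
    by_cases hm : f^[m] x ∈ Xp i
    · rw [Set.indicator_of_mem hm]
      exact (hg (f^[m] x)).2
    · have : G (f^[m] x) = 0 := hg0 (fun hh => hm (interior_subset hh))
      simp [this, hm]
  choose u hu hle using low
  have hup : Tendsto (fun n => 1 - ∑ i ∈ Finset.univ.erase j, u i n) atTop (𝓝 (p j)) := by
    have h1 := (tendsto_finsetSum (Finset.univ.erase j) (fun i _ => hu i)).const_sub 1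
    have h2 := Finset.add_sum_erase Finset.univ p (Finset.mem_univ j)
    rw [hp.2] at h2
    have : 1 - ∑ i ∈ Finset.univ.erase j, p i = p j := by linarith
    rwa [this] at h1
  refine tendsto_of_tendsto_of_tendsto_of_le_of_le' (hu j) hup
    (Eventually.of_forall (hle j)) ?_
  filter_upwards [eventually_gt_atTop 0] with n hn
  have hn' : (0:ℝ) < n := by exact_mod_cast hn
  have h1 := vis_sum f Y Xp hXd hXU n x
  have h2 := Finset.add_sum_erase Finset.univ (fun i => vis f (Xp i) n x / n) (Finset.mem_univ j)
  have h3 : ∑ i, vis f (Xp i) n x / n ≤ 1 := by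
    rw [← Finset.sum_div, div_le_one hn']
    linarith [vis_nonneg f Y n x]
  have h4 : ∑ i ∈ Finset.univ.erase j, u i n ≤ ∑ i ∈ Finset.univ.erase j, vis f (Xp i) n x / n :=
    Finset.sum_le_sum fun i _ => hle i n
  linarith

lemma vis_block_zero (f : X → X) (A : Set X) (x : X) (a b : ℕ)
    (h : ∀ m, a ≤ m → m < b → f^[m] x ∉ A) (n : ℕ) (h1 : a ≤ n) (h2 : n ≤ b) :
    vis f A n x = vis f A a x := by
  induction n, h1 using Nat.le_induction with
  | base => rfl
  | succ n hn ih =>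
    rw [vis_succ, ih (by omega)]
    simp [h n hn (by omega)]

lemma vis_block_one (f : X → X) (A : Set X) (x : X) (a b : ℕ)
    (h : ∀ m, a ≤ m → m < b → f^[m] x ∈ A) (n : ℕ) (h1 : a ≤ n) (h2 : n ≤ b) :
    (n : ℝ) - vis f A n x = a - vis f A a x := by
  induction n, h1 using Nat.le_induction with
  | base => rfl
  | succ n hn ih =>
    have := ih (by omega)
    rw [vis_succ]
    simp only [h n hn (by omega), Set.indicator_of_mem]
    push_cast
    linarith

lemma vis_le (f : X → X) (A : Set X) (n : ℕ) (x : X) : vis f A n x ≤ n := by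
  have := vis_add_le f A 0 n x
  simpa [vis] using this

/-- Convergence along return times implies convergence along all times. -/
lemma tau_to_freq {d : ℕ} (f : X → X) (Y : Set X) (Xp : Fin d → Set X)
    (hXd : Pairwise (Function.onFun Disjoint Xp)) (hXU : (⋃ j, Xp j) = Yᶜ)
    (hnc : ∀ z : X, ∀ n m : ℕ, ∀ i j, i ≠ j →
      f^[n] z ∈ Xp i → f^[n + m] z ∈ Xp j → ∃ k, 0 < k ∧ k < m ∧ f^[n + k] z ∈ Y)
    (x : X) (hxY : x ∈ Y) (hxrec : ∀ N : ℕ, ∃ n, N ≤ n ∧ 1 ≤ n ∧ f^[n] x ∈ Y)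
    (q : ℝ) (j : Fin d)
    (h : Tendsto (fun k => vis f (Xp j) (tauSum f Y k x) x / tauSum f Y k x) atTop (𝓝 q)) :
    Tendsto (fun n : ℕ => vis f (Xp j) n x / n) atTop (𝓝 q) := by
  rw [Metric.tendsto_atTop] at h ⊢
  intro ε hε
  obtain ⟨K1, hK1⟩ := h (ε/2) (by positivity)
  have ht := tau_tendsto f Y x hxrec
  have ht2 : Tendsto (fun k => (1:ℝ) / tauSum f Y k x) atTop (𝓝 0) :=
    tendsto_const_nhds.div_atTop (tendsto_natCast_atTop_atTop.comp ht)
  obtain ⟨K2, hK2⟩ := (Metric.tendsto_atTop.1 ht2) (ε/2) (by positivity)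
  obtain ⟨K, hKa, hKb, hKc⟩ : ∃ K, K1 ≤ K ∧ K2 ≤ K ∧ 1 ≤ K :=
    ⟨max K1 (max K2 1), by simp, by simp, by simp⟩
  refine ⟨tauSum f Y K x + 1, fun n hn => ?_⟩
  have hsm := strictMono_nat_of_lt_succ (tau_lt f Y x hxrec)
  -- the block containing `n`
  obtain ⟨k, hk, hk1, hk2⟩ : ∃ k, K ≤ k ∧ tauSum f Y k x < n ∧ n ≤ tauSum f Y (k+1) x := by
    have hex : ∃ k, n ≤ tauSum f Y k x := ⟨n, hsm.le_apply⟩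
    classical
    have hs := Nat.find_spec hex
    have hm := fun m => Nat.find_min hex (m := m)
    have hgt : K < Nat.find hex := by
      by_contra hc
      have := hsm.monotone (not_lt.1 hc)
      omega
    refine ⟨Nat.find hex - 1, by omega, ?_, ?_⟩
    · exact not_le.1 (hm _ (by omega))
    · rw [Nat.sub_add_cancel (by omega)]
      exact hs
  have A1 := hK1 k (by omega)
  have A2 := hK1 (k+1) (by omega)
  have A3 := hK2 k (by omega)
  have htpos : 0 < tauSum f Y k x := by
    have := hsm.le_apply (x := k)
    omega
  rw [Real.dist_eq, abs_lt] at A1 A2 A3 ⊢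
  have hYX : ∀ y ∈ Y, ∀ i, y ∉ Xp i := fun y hy i h => by
    have : y ∈ Yᶜ := hXU ▸ Set.mem_iUnion.2 ⟨i, h⟩
    exact this hy
  have hb := tau_between f Y x k
  have hmem := tau_mem f Y x hxY hxrec k
  generalize tauSum f Y k x = a at *
  generalize tauSum f Y (k+1) x = b at *
  have ha' : (0:ℝ) < a := by exact_mod_cast htpos
  have hn' : (0:ℝ) < n := by
    have : 0 < n := by omega
    exact_mod_cast this
  have hb' : (0:ℝ) < b := by
    have : 0 < b := by omega
    exact_mod_cast this
  have han : (a:ℝ) ≤ n := by exact_mod_cast hk1.le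
  have hnb : (n:ℝ) ≤ b := by exact_mod_cast hk2
  by_cases hc : ∃ m, a < m ∧ m < b ∧ f^[m] x ∈ Xp j
  · obtain ⟨m, hm1, hm2, hm3⟩ := hc
    have hall : ∀ m', a + 1 ≤ m' → m' < b → f^[m'] x ∈ Xp j := by
      intro m' h1 h2
      have hnY := hb m' h1 h2
      have : f^[m'] x ∈ ⋃ j, Xp j := hXU ▸ hnY
      obtain ⟨i, hi⟩ := Set.mem_iUnion.1 this
      by_cases hij : i = j
      · rwa [hij] at hi
      exfalso
      rcases le_total m m' with hle | hle
      · obtain ⟨l, rfl⟩ := Nat.exists_eq_add_of_le hle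
        obtain ⟨r, hr1, hr2, hr3⟩ := hnc x m l j i (Ne.symm hij) hm3 hi
        exact hb (m + r) (by omega) (by omega) hr3
      · obtain ⟨l, rfl⟩ := Nat.exists_eq_add_of_le hle
        obtain ⟨r, hr1, hr2, hr3⟩ := hnc x m' l i j hij hi hm3
        exact hb (m' + r) (by omega) (by omega) hr3
    have B1 := vis_block_one f (Xp j) x (a+1) b hall n (by omega) hk2
    have B2 := vis_block_one f (Xp j) x (a+1) b hall b (by omega) le_rfl
    have B3 : vis f (Xp j) (a+1) x = vis f (Xp j) a x := by
      rw [vis_succ]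
      simp [hYX _ hmem j]
    rw [B3] at B1 B2
    push_cast at B1 B2
    have hva := vis_le f (Xp j) a x
    generalize vis f (Xp j) a x = va at *
    generalize vis f (Xp j) n x = vn at *
    generalize vis f (Xp j) b x = vb at *
    have C1 : va / a - 1 / a ≤ vn / n := by
      rw [← sub_div, div_le_div_iff₀ ha' hn']
      nlinarith
    have C2 : vn / n ≤ vb / b := by
      rw [div_le_div_iff₀ hn' hb']
      nlinarith
    constructor <;> linarith
  · push Not at hc
    have hall : ∀ m', a ≤ m' → m' < b → f^[m'] x ∉ Xp j := by
      intro m' h1 h2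
      rcases h1.eq_or_lt with rfl | h1
      · exact hYX _ hmem j
      · exact hc m' h1 h2
    have B1 := vis_block_zero f (Xp j) x a b hall n (by omega) hk2
    have B2 := vis_block_zero f (Xp j) x a b hall b (by omega) le_rfl
    have hva := vis_nonneg f (Xp j) a x
    rw [B2] at A2
    rw [B1]
    have C1 : vis f (Xp j) a x / n ≤ vis f (Xp j) a x / a :=
      div_le_div_of_nonneg_left hva ha' han
    have C2 : vis f (Xp j) a x / b ≤ vis f (Xp j) a x / n :=
      div_le_div_of_nonneg_left hva hn' hnb
    constructor <;> linarith

/-- Visits to a set with bounded hit times are controlled by visits to `Y`. -/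
lemma vis_bound (f : X → X) (Y K : Set X) (B : ℕ)
    (hB : ∀ z ∈ K \ Y, ∃ n, 1 ≤ n ∧ n ≤ B ∧ f^[n] z ∈ Y) (n : ℕ) (x : X) :
    vis f K n x ≤ (B + 1) * (vis f Y n x + B) := by
  have h1 : ∀ m, K.indicator (fun _ => (1:ℝ)) (f^[m] x) ≤
      ∑ l ∈ Finset.range (B+1), Y.indicator (fun _ => (1:ℝ)) (f^[m+l] x) := by
    intro m
    by_cases hK : f^[m] x ∈ K
    · obtain ⟨l, hl, hlY⟩ : ∃ l, l ≤ B ∧ f^[m+l] x ∈ Y := by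
        by_cases hY : f^[m] x ∈ Y
        · exact ⟨0, by omega, hY⟩
        · obtain ⟨l, _, h2, h3⟩ := hB _ ⟨hK, hY⟩
          refine ⟨l, h2, ?_⟩
          rwa [add_comm, Function.iterate_add_apply]
      have := Finset.single_le_sum (s := Finset.range (B+1))
        (f := fun l => Y.indicator (fun _ => (1:ℝ)) (f^[m+l] x))
        (fun i _ => ind_nonneg _ _) (Finset.mem_range.2 (Nat.lt_succ_of_le hl))
      simpa [hK, hlY] using this
    · simp only [hK, not_false_eq_true, Set.indicator_of_notMem]
      exact Finset.sum_nonneg fun _ _ => ind_nonneg _ _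
  have h2 : ∀ l ∈ Finset.range (B+1),
      ∑ m ∈ Finset.range n, Y.indicator (fun _ => (1:ℝ)) (f^[m+l] x) ≤ vis f Y n x + B := by
    intro l hl
    have e : vis f Y (l+n) x = vis f Y l x +
        ∑ m ∈ Finset.range n, Y.indicator (fun _ => (1:ℝ)) (f^[m+l] x) := by
      unfold vis
      rw [Finset.sum_range_add]
      simp only [add_comm]
    have e2 := vis_add_le f Y n l x
    rw [add_comm n l] at e2
    have e3 := vis_nonneg f Y l x
    have e4 : (l:ℝ) ≤ B := by
      have := Finset.mem_range.1 hl
      exact_mod_cast Nat.lt_succ_iff.1 this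
    linarith
  calc vis f K n x ≤ ∑ m ∈ Finset.range n, ∑ l ∈ Finset.range (B+1),
        Y.indicator (fun _ => (1:ℝ)) (f^[m+l] x) := Finset.sum_le_sum fun m _ => h1 m
    _ = ∑ l ∈ Finset.range (B+1), ∑ m ∈ Finset.range n,
        Y.indicator (fun _ => (1:ℝ)) (f^[m+l] x) := Finset.sum_comm
    _ ≤ ∑ l ∈ Finset.range (B+1), (vis f Y n x + B) := Finset.sum_le_sum h2
    _ = _ := by
      simp
      ring

/-- Convergence of visit frequencies forces weak convergence. -/
lemma freq_to_weak {d : ℕ} (f : X → X) (Y : Set X) (ξ : Fin d → X) (Xp : Fin d → Set X)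
    (hXd : Pairwise (Function.onFun Disjoint Xp)) (hXU : (⋃ j, Xp j) = Yᶜ)
    (hξint : ∀ j, ξ j ∈ interior (Xp j))
    (hbd : ∀ K : Set X, IsCompact K → (∀ j, ξ j ∉ K) →
      ∃ B : ℕ, ∀ z ∈ K \ Y, ∃ n, 1 ≤ n ∧ n ≤ B ∧ f^[n] z ∈ Y)
    (x : X) (p : Fin d → ℝ) (hp : p ∈ simplexS d)
    (h : ∀ j, Tendsto (fun n : ℕ => vis f (Xp j) n x / n) atTop (𝓝 (p j))) :
    WeakTendsto (fun n => empMeasure f (n + 1) x) (nuMeasure ξ p) := by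
  intro g
  rw [integral_nuMeasure ξ p (fun i => (hp.1 i).1)]
  simp_rw [integral_empMeasure]
  refine (tendsto_add_atTop_iff_nat
      (f := fun n : ℕ => (n:ℝ)⁻¹ * ∑ k ∈ Finset.range n, g (f^[k] x)) 1).2 ?_
  have hinv : Tendsto (fun n : ℕ => (n:ℝ)⁻¹) atTop (𝓝 0) := tendsto_inv_atTop_nhds_zero_nat
  have hY : Tendsto (fun n : ℕ => vis f Y n x / n) atTop (𝓝 0) := by
    have h1 := (tendsto_finsetSum Finset.univ (fun i _ => h i)).const_sub 1
    rw [hp.2, sub_self] at h1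
    refine h1.congr' ?_
    filter_upwards [eventually_gt_atTop 0] with n hn
    have hn' : (n:ℝ) ≠ 0 := by exact_mod_cast hn.ne'
    have := vis_sum f Y Xp hXd hXU n x
    rw [← Finset.sum_div]
    field_simp
    linarith
  have hmain : Tendsto (fun n : ℕ => ∑ j, vis f (Xp j) n x / n * g (ξ j)) atTop
      (𝓝 (∑ j, p j * g (ξ j))) :=
    tendsto_finsetSum Finset.univ (fun i _ => (h i).mul_const _)
  have hdiff : Tendsto (fun n : ℕ => (n:ℝ)⁻¹ * ∑ k ∈ Finset.range n, g (f^[k] x) -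
      ∑ j, vis f (Xp j) n x / n * g (ξ j)) atTop (𝓝 0) := by
    rw [Metric.tendsto_atTop]
    intro ε hε
    let U : Fin d → Set X := fun j => interior (Xp j) ∩ {y | |g y - g (ξ j)| < ε/2}
    have hUo : ∀ j, IsOpen (U j) := fun j =>
      isOpen_interior.inter (isOpen_lt (by fun_prop) continuous_const)
    let K : Set X := (⋃ j, U j)ᶜ
    have hKc : IsCompact K := (isOpen_iUnion hUo).isClosed_compl.isCompact
    obtain ⟨B, hB⟩ := hbd K hKc (fun j hj => hj (Set.mem_iUnion.2
      ⟨j, hξint j, by simpa using half_pos hε⟩))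
    have hKn : Tendsto (fun n : ℕ => 2 * ‖g‖ * ((B + 1) * (vis f Y n x / n + B * (n:ℝ)⁻¹)))
        atTop (𝓝 0) := by
      have := ((hY.add (hinv.const_mul (B:ℝ))).const_mul ((B:ℝ)+1)).const_mul (2 * ‖g‖)
      simpa using this
    obtain ⟨N, hN⟩ := (Metric.tendsto_atTop.1 hKn) (ε/2) (by positivity)
    refine ⟨N + 1, fun n hn => ?_⟩
    have hn' : (0:ℝ) < n := by
      have : 0 < n := by omega
      exact_mod_cast this
    have hNn := (abs_lt.1 (by simpa [Real.dist_eq] using hN n (by omega) :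
      |2 * ‖g‖ * ((B + 1) * (vis f Y n x / n + B * (n:ℝ)⁻¹))| < ε/2)).2
    have hpt : ∀ y, |g y - ∑ j, (Xp j).indicator (fun _ => (1:ℝ)) y * g (ξ j)| ≤
        ε/2 + 2 * ‖g‖ * K.indicator (fun _ => (1:ℝ)) y := by
      intro y
      have hgn := fun y => g.norm_coe_le_norm y
      simp only [Real.norm_eq_abs] at hgn
      have hg0 := norm_nonneg g
      by_cases hy : y ∈ Y
      · have hnx : ∀ j, y ∉ Xp j := fun j h => by
          have : y ∈ Yᶜ := hXU ▸ Set.mem_iUnion.2 ⟨j, h⟩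
          exact this hy
        have hyK : y ∈ K := fun hh => by
          obtain ⟨j, hj⟩ := Set.mem_iUnion.1 hh
          exact hnx j (interior_subset hj.1)
        simp only [hnx, hyK, not_false_eq_true, Set.indicator_of_notMem, Set.indicator_of_mem,
          zero_mul, Finset.sum_const_zero, sub_zero]
        linarith [hgn y]
      · have : y ∈ ⋃ j, Xp j := hXU ▸ hy
        obtain ⟨j, hj⟩ := Set.mem_iUnion.1 this
        have hs : ∑ i, (Xp i).indicator (fun _ => (1:ℝ)) y * g (ξ i) = g (ξ j) := by
          rw [Finset.sum_eq_single j]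
          · simp [hj]
          · intro i _ hij
            have : y ∉ Xp i := fun h => (hXd hij).le_bot ⟨h, hj⟩
            simp [this]
          · simp
        rw [hs]
        by_cases hyK : y ∈ K
        · simp only [hyK, Set.indicator_of_mem]
          have := abs_sub (g y) (g (ξ j))
          linarith [hgn y, hgn (ξ j)]
        · have : y ∈ ⋃ j, U j := not_not.1 hyK
          obtain ⟨i, hi⟩ := Set.mem_iUnion.1 this
          have hij : i = j := by
            by_contra hne
            exact (hXd hne).le_bot ⟨interior_subset hi.1, hj⟩
          subst hij
          simp only [hyK, not_false_eq_true, Set.indicator_of_notMem, mul_zero, add_zero]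
          exact le_of_lt hi.2
    have hsum : ∑ k ∈ Finset.range n, g (f^[k] x) - ∑ j, vis f (Xp j) n x * g (ξ j) =
        ∑ k ∈ Finset.range n, (g (f^[k] x) -
          ∑ j, (Xp j).indicator (fun _ => (1:ℝ)) (f^[k] x) * g (ξ j)) := by
      rw [Finset.sum_sub_distrib, Finset.sum_comm]
      simp only [vis, Finset.sum_mul]
    have hest : |∑ k ∈ Finset.range n, g (f^[k] x) - ∑ j, vis f (Xp j) n x * g (ξ j)| ≤
        n * (ε/2) + 2 * ‖g‖ * vis f K n x := by
      rw [hsum]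
      refine (Finset.abs_sum_le_sum_abs _ _).trans
        ((Finset.sum_le_sum fun k _ => hpt (f^[k] x)).trans (le_of_eq ?_))
      rw [Finset.sum_add_distrib, ← Finset.mul_sum]
      simp [vis]
    have hvK := vis_bound f Y K B hB n x
    have hre : (n:ℝ)⁻¹ * ∑ k ∈ Finset.range n, g (f^[k] x) -
        ∑ j, vis f (Xp j) n x / n * g (ξ j) = (n:ℝ)⁻¹ *
        (∑ k ∈ Finset.range n, g (f^[k] x) - ∑ j, vis f (Xp j) n x * g (ξ j)) := by
      rw [mul_sub, Finset.mul_sum Finset.univ]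
      congr 1
      refine Finset.sum_congr rfl fun j _ => ?_
      ring
    rw [Real.dist_eq, sub_zero, hre, abs_mul, abs_of_pos (inv_pos.2 hn')]
    calc (n:ℝ)⁻¹ * |∑ k ∈ Finset.range n, g (f^[k] x) - ∑ j, vis f (Xp j) n x * g (ξ j)|
        ≤ (n:ℝ)⁻¹ * (n * (ε/2) + 2 * ‖g‖ * ((B + 1) * (vis f Y n x + B))) := by
          gcongr
          exact hest.trans (by gcongr)
      _ = ε/2 + 2 * ‖g‖ * ((B + 1) * (vis f Y n x / n + B * (n:ℝ)⁻¹)) := by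
          field_simp
      _ < ε := by linarith
  have := hdiff.add hmain
  simpa using this

/-- For every `p̄ ∈ S`: the empirical measures `e_n(x)` converge weakly* to
`ν_p̄` iff `τ̄_k(x)/τ_k(x) → p̄`. -/
theorem stmt5 (f : X → X) (hf : Measurable f)
    (Y : Set X) (hYc : IsCompact Y)
    (d : ℕ) (hd : 1 ≤ d) (ξ : Fin d → X) (hξ : Function.Injective ξ)
    (hξY : ∀ j, ξ j ∉ Y)
    (Xp : Fin d → Set X) (hXm : ∀ j, MeasurableSet (Xp j))
    (hXd : Pairwise (Function.onFun Disjoint Xp))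
    (hXU : (⋃ j, Xp j) = Yᶜ)
    (hξint : ∀ j, ξ j ∈ interior (Xp j))
    (hξcl : ∀ i j, i ≠ j → ξ i ∉ closure (Xp j))
    (hnc : ∀ z : X, ∀ n m : ℕ, ∀ i j, i ≠ j →
      f^[n] z ∈ Xp i → f^[n + m] z ∈ Xp j → ∃ k, 0 < k ∧ k < m ∧ f^[n + k] z ∈ Y)
    (hbd : ∀ K : Set X, IsCompact K → (∀ j, ξ j ∉ K) →
      ∃ B : ℕ, ∀ z ∈ K \ Y, ∃ n, 1 ≤ n ∧ n ≤ B ∧ f^[n] z ∈ Y)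
    (x : X) (hxY : x ∈ Y) (hxrec : ∀ N : ℕ, ∃ n, N ≤ n ∧ 1 ≤ n ∧ f^[n] x ∈ Y)
    (p : Fin d → ℝ) (hp : p ∈ simplexS d) :
    WeakTendsto (fun n => empMeasure f (n + 1) x) (nuMeasure ξ p) ↔
      Tendsto (fun k => tauRatio f Y Xp (k + 1) x) atTop (𝓝 p) := by
  have hdis : ∀ j, Disjoint (Xp j) Y := fun j => by
    rw [Set.disjoint_left]
    intro y hy
    have : y ∈ Yᶜ := hXU ▸ Set.mem_iUnion.2 ⟨j, hy⟩
    exact this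
  have hr : ∀ k j, tauRatio f Y Xp k x j =
      vis f (Xp j) (tauSum f Y k x) x / tauSum f Y k x := fun k j => by
    unfold tauRatio
    rw [tauJSum_eq f Y x hxY hxrec (Xp j) (hdis j) k]
  rw [tendsto_pi_nhds]
  simp only [hr]
  constructor
  · intro h j
    have := weak_to_freq f Y ξ Xp hXd hXU hξint x p hp h j
    exact this.comp ((tau_tendsto f Y x hxrec).comp (tendsto_add_atTop_nat 1))
  · intro h
    refine freq_to_weak f Y ξ Xp hXd hXU hξint hbd x p hp fun j => ?_
    refine tau_to_freq f Y Xp hXd hXU hnc x hxY hxrec (p j) j ?_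
    exact (tendsto_add_atTop_iff_nat
      (f := fun k => vis f (Xp j) (tauSum f Y k x) x / tauSum f Y k x) 1).1 (h j)
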